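/- arXiv:1912.00591 — 3 statements merged into one kernel-verified Lean document; each statement's English description precedes it below -/
import Mathlib

section
/- Let S : ℝ³ → Matrix (Fin 3) (Fin 3) ℝ be a smooth matrix-valued field that is pointwise symmetric (S_{ab} = S_{ba}), trace-free (Σ_a S_{aa} = 0), and divergence-free (Σ_b ∂_b S_{ab} = 0 for every a). Then the symmetrized tensor curl applied twice gives minus the Laplacian: (curl (curl S))_{ab} = −ΔS_{ab} for all a, b, where Δ = Σ_c ∂_c². -/
/-- Partial derivative `∂_i` of a scalar field on `ℝ³`. -/
noncomputable def pd (i : Fin 3) (f : (Fin 3 → ℝ) → ℝ) (x : Fin 3 → ℝ) : ℝ :=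
  deriv (fun s => f (Function.update x i s)) (x i)

/-- Levi-Civita symbol on three indices. -/
noncomputable def eps (a b c : Fin 3) : ℝ :=
  (((b : ℕ) : ℝ) - ((a : ℕ) : ℝ)) * (((c : ℕ) : ℝ) - ((b : ℕ) : ℝ))
    * (((c : ℕ) : ℝ) - ((a : ℕ) : ℝ)) / 2

/-- Symmetrized tensor curl of a matrix-valued field on `ℝ³`:
`(curl S)_{ab} = ½ Σ_{c,d} ( ε_{acd} ∂_c S_{db} + ε_{bcd} ∂_c S_{da} )`. -/
noncomputable def curlT (S : (Fin 3 → ℝ) → Matrix (Fin 3) (Fin 3) ℝ)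
    (x : Fin 3 → ℝ) : Matrix (Fin 3) (Fin 3) ℝ :=
  Matrix.of fun a b =>
    (1 / 2) * ∑ c, ∑ d,
      (eps a c d * pd c (fun y => S y d b) x + eps b c d * pd c (fun y => S y d a) x)

theorem pd_eq_fderiv (i : Fin 3) (f : (Fin 3 → ℝ) → ℝ) (x : Fin 3 → ℝ)
    (hf : DifferentiableAt ℝ f x) : pd i f x = fderiv ℝ f x (Pi.single i 1) := by
  unfold pd
  have h1 : HasDerivAt (Function.update x i) (Pi.single i (1 : ℝ)) (x i) :=
    hasDerivAt_update x i (x i)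
  have h2 : HasFDerivAt f (fderiv ℝ f x) (Function.update x i (x i)) := by
    rw [Function.update_eq_self]
    exact hf.hasFDerivAt
  exact (h2.comp_hasDerivAt (x i) h1).deriv

theorem pd_fun (i : Fin 3) (f : (Fin 3 → ℝ) → ℝ) (hf : ContDiff ℝ (⊤ : ℕ∞) f) :
    pd i f = fun x => fderiv ℝ f x (Pi.single i 1) := by
  funext x
  exact pd_eq_fderiv i f x ((hf.differentiable (by simp)) x)

theorem pd_smooth (i : Fin 3) (f : (Fin 3 → ℝ) → ℝ) (hf : ContDiff ℝ (⊤ : ℕ∞) f) :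
    ContDiff ℝ (⊤ : ℕ∞) (pd i f) := by
  rw [pd_fun i f hf]
  exact (hf.fderiv_right (m := (⊤ : ℕ∞)) (by simp)).clm_apply contDiff_const

theorem pd_comm (i j : Fin 3) (f : (Fin 3 → ℝ) → ℝ) (hf : ContDiff ℝ (⊤ : ℕ∞) f)
    (x : Fin 3 → ℝ) : pd i (pd j f) x = pd j (pd i f) x := by
  have key : ∀ i j : Fin 3, pd i (pd j f) x
      = fderiv ℝ (fderiv ℝ f) x (Pi.single i 1) (Pi.single j 1) := by
    intro i j
    have hd : DifferentiableAt ℝ (fderiv ℝ f) x :=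
      ((hf.fderiv_right (m := (⊤ : ℕ∞)) (by simp)).differentiable (by simp)) x
    rw [pd_eq_fderiv i _ x (((pd_smooth j f hf).differentiable (by simp)) x), pd_fun j f hf,
      fderiv_clm_apply hd (differentiableAt_const _)]
    simp
  rw [key, key]
  have hs : IsSymmSndFDerivAt ℝ f x :=
    (hf.contDiffAt).isSymmSndFDerivAt (by simp; exact WithTop.coe_le_coe.2 (le_top : (2 : ℕ∞) ≤ ⊤))
  exact hs _ _

theorem pd_add (i : Fin 3) (f g : (Fin 3 → ℝ) → ℝ) (hf : ContDiff ℝ (⊤ : ℕ∞) f)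
    (hg : ContDiff ℝ (⊤ : ℕ∞) g) (x : Fin 3 → ℝ) :
    pd i (fun y => f y + g y) x = pd i f x + pd i g x := by
  have h1 := (hf.differentiable (by simp)) x
  have h2 := (hg.differentiable (by simp)) x
  rw [pd_eq_fderiv i (fun y => f y + g y) x (h1.add h2), pd_eq_fderiv i _ x h1, pd_eq_fderiv i _ x h2,
    fderiv_fun_add h1 h2]
  rfl

theorem pd_mul (i : Fin 3) (k : ℝ) (f : (Fin 3 → ℝ) → ℝ) (x : Fin 3 → ℝ) :
    pd i (fun y => k * f y) x = k * pd i f x := by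
  unfold pd
  exact deriv_const_mul_field k

theorem pd_sum (i : Fin 3) (F : Fin 3 → (Fin 3 → ℝ) → ℝ)
    (hF : ∀ c, ContDiff ℝ (⊤ : ℕ∞) (F c)) (x : Fin 3 → ℝ) :
    pd i (fun y => ∑ c, F c y) x = ∑ c, pd i (F c) x := by
  simp only [Fin.sum_univ_three]
  rw [pd_add i (fun y => F 0 y + F 1 y) (F 2) ((hF 0).add (hF 1)) (hF 2),
    pd_add i (F 0) (F 1) (hF 0) (hF 1)]

theorem pd_zero (i : Fin 3) (x : Fin 3 → ℝ) : pd i (fun _ => (0 : ℝ)) x = 0 := by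
  simp [pd]

theorem pd_curlT (S : (Fin 3 → ℝ) → Matrix (Fin 3) (Fin 3) ℝ)
    (hS : ∀ a b, ContDiff ℝ (⊤ : ℕ∞) (fun x => S x a b)) (i a b : Fin 3) (x : Fin 3 → ℝ) :
    pd i (fun y => curlT S y a b) x = (1 / 2) * ∑ c, ∑ d,
      (eps a c d * pd i (pd c (fun y => S y d b)) x
        + eps b c d * pd i (pd c (fun y => S y d a)) x) := by
  have hp : ∀ (k : ℝ) (c d b : Fin 3),
      ContDiff ℝ (⊤ : ℕ∞) (fun x => k * pd c (fun y => S y d b) x) := fun k c d b =>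
    contDiff_const.mul (pd_smooth c _ (hS d b))
  simp only [curlT, Matrix.of_apply]
  rw [pd_mul, pd_sum i _ (fun c => ContDiff.sum fun d _ => (hp _ c d b).add (hp _ c d a))]
  congr 1
  refine Finset.sum_congr rfl fun c _ => ?_
  rw [pd_sum i _ (fun d => (hp _ c d b).add (hp _ c d a))]
  refine Finset.sum_congr rfl fun d _ => ?_
  rw [pd_add i _ _ (hp _ c d b) (hp _ c d a), pd_mul, pd_mul]

/-- For a smooth symmetric trace-free divergence-free matrix field `S` on `ℝ³`,
the symmetrized tensor curl applied twice gives minus the Laplacian: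
`(curl (curl S))_{ab} = −ΔS_{ab}`. -/
theorem curl_curl_of_transverse_tracefree
    (S : (Fin 3 → ℝ) → Matrix (Fin 3) (Fin 3) ℝ)
    (hSsmooth : ∀ a b, ContDiff ℝ (⊤ : ℕ∞) (fun x => S x a b))
    (hSsymm : ∀ x a b, S x a b = S x b a)
    (hStrace : ∀ x, (∑ a, S x a a) = 0)
    (hSdiv : ∀ x a, (∑ b, pd b (fun y => S y a b) x) = 0) :
    ∀ x a b, curlT (curlT S) x a b = - ∑ c, pd c (pd c (fun y => S y a b)) x := by
  intro x a b
  have hsym : ∀ a b, (fun y => S y a b) = (fun y => S y b a) := fun a b =>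
    funext fun y => hSsymm y a b
  have htr : ∀ i j, ∑ a, pd i (pd j (fun y => S y a a)) x = 0 := by
    intro i j
    rw [← pd_sum i _ (fun a => pd_smooth j _ (hSsmooth a a))]
    have : (fun y => ∑ a, pd j (fun y => S y a a) y) = fun _ => 0 := by
      funext y
      rw [← pd_sum j _ (fun a => hSsmooth a a)]
      simp only [hStrace]
      exact pd_zero j y
    rw [this, pd_zero]
  have hdv : ∀ i a, ∑ b, pd i (pd b (fun y => S y a b)) x = 0 := by
    intro i a
    rw [← pd_sum i _ (fun b => pd_smooth b _ (hSsmooth a b))]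
    simp only [hSdiv]
    exact pd_zero i x
  have hcm : ∀ i j a b, pd i (pd j (fun y => S y a b)) x = pd j (pd i (fun y => S y a b)) x :=
    fun i j a b => pd_comm i j _ (hSsmooth a b) x
  have hL : curlT (curlT S) x a b = (1 / 2) * ∑ c, ∑ d,
      (eps a c d * pd c (fun y => curlT S y d b) x
        + eps b c d * pd c (fun y => curlT S y d a) x) := rfl
  rw [hL]
  simp only [pd_curlT S hSsmooth]
  obtain ⟨D, hD⟩ : ∃ D : Fin 3 → Fin 3 → Fin 3 → Fin 3 → ℝ,
      ∀ i j a b, pd i (pd j (fun y => S y a b)) x = D i j a b := ⟨_, fun _ _ _ _ => rfl⟩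
  have hsD : ∀ i j a b, D i j a b = D i j b a := by
    intro i j a b
    rw [← hD, ← hD, hsym]
  simp only [hD] at htr hdv hcm ⊢
  clear hD hL
  simp only [Fin.sum_univ_three] at htr hdv ⊢
  have s1 := fun i j => hsD i j 1 0
  have s2 := fun i j => hsD i j 2 0
  have s3 := fun i j => hsD i j 2 1
  have c1 := hcm 1 0
  have c2 := hcm 2 0
  have c3 := hcm 2 1
  have t00 := htr 0 0
  have t01 := htr 0 1
  have t02 := htr 0 2
  have t11 := htr 1 1
  have t12 := htr 1 2
  have t22 := htr 2 2
  have d00 := hdv 0 0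
  have d01 := hdv 0 1
  have d02 := hdv 0 2
  have d10 := hdv 1 0
  have d11 := hdv 1 1
  have d12 := hdv 1 2
  have d20 := hdv 2 0
  have d21 := hdv 2 1
  have d22 := hdv 2 2
  clear htr hdv hcm hsD
  simp only [s1, s2, s3, c1, c2, c3] at t00 t01 t02 t11 t12 t22 d00 d01 d02 d10 d11 d12 d20 d21 d22
  have e : ∀ a b c, eps a b c = (((b : ℕ) : ℝ) - ((a : ℕ) : ℝ)) * (((c : ℕ) : ℝ) - ((b : ℕ) : ℝ))
    * (((c : ℕ) : ℝ) - ((a : ℕ) : ℝ)) / 2 := fun _ _ _ => rfl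
  fin_cases a <;> fin_cases b <;>
    simp [e, s1, s2, s3, c1, c2, c3] <;> linarith
end

section
/- Let I ⊆ ℝ be an open interval and let φ, ℰ : I → ℝ be differentiable functions satisfying φ′ = −½φ² − ℰ and ℰ′ = −(3/2)φℰ on I, and suppose K := −ℰ + ¼φ² is strictly positive on I. Then the function s ↦ ℰ(s)·K(s)^{−3/2} is constant on I. -/
/-- If on an open interval `I` the functions `φ, ℰ` satisfy `φ′ = −½φ² − ℰ` and
`ℰ′ = −(3/2)φℰ`, and the Gaussian curvature `K = −ℰ + ¼φ²` is strictly positive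
on `I`, then `ℰ·K^{−3/2}` is constant on `I`. -/
theorem weyl_curvature_first_integral
    (I : Set ℝ) (hIopen : IsOpen I) (hIinterval : I.OrdConnected)
    (φ ℰ : ℝ → ℝ)
    (hφ : ∀ s ∈ I, HasDerivAt φ (-(1 / 2) * (φ s) ^ 2 - ℰ s) s)
    (hℰ : ∀ s ∈ I, HasDerivAt ℰ (-(3 / 2) * φ s * ℰ s) s)
    (hK : ∀ s ∈ I, 0 < -ℰ s + (1 / 4) * (φ s) ^ 2) :
    ∃ c : ℝ, ∀ s ∈ I,
      ℰ s * (-ℰ s + (1 / 4) * (φ s) ^ 2) ^ (-(3 : ℝ) / 2) = c := by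
  have key : ∀ s ∈ I, HasDerivAt
      (fun s => ℰ s * (-ℰ s + (1 / 4) * (φ s) ^ 2) ^ (-(3 : ℝ) / 2)) 0 s := by
    intro s hs
    have hk := hK s hs
    have h1 : HasDerivAt (fun s => -ℰ s + (1 / 4) * (φ s) ^ 2)
        (-φ s * (-ℰ s + (1 / 4) * (φ s) ^ 2)) s := by
      refine ((hℰ s hs).neg.add (((hφ s hs).pow 2).const_mul (1 / 4))).congr_deriv ?_
      norm_num
      ring
    have h2 := h1.rpow_const (p := -(3 : ℝ) / 2) (Or.inl hk.ne')
    refine ((hℰ s hs).mul h2).congr_deriv ?_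
    rw [Real.rpow_sub_one hk.ne']
    generalize -ℰ s + (1 / 4) * (φ s) ^ 2 = k at hk
    field_simp
    ring
  have hd : DifferentiableOn ℝ
      (fun s => ℰ s * (-ℰ s + (1 / 4) * (φ s) ^ 2) ^ (-(3 : ℝ) / 2)) I :=
    fun s hs => (key s hs).differentiableAt.differentiableWithinAt
  exact hIopen.exists_is_const_of_deriv_eq_zero hIinterval.isPreconnected hd
    (fun s hs => (key s hs).deriv)
end

section
/- (Integration of the Schwarzschild background equations.) Let I ⊆ ℝ be an open interval and let φ, ℰ : I → ℝ be differentiable with φ′ = −½φ² − ℰ and ℰ′ = −(3/2)φℰ on I. Suppose φ > 0, ℰ < 0, and K := −ℰ + ¼φ² > 0 on I, and define the areal radius r := K^{−1/2}. Then there exists a constant m > 0 such that for every s ∈ I: r(s) > 2m, ℰ(s) = −2m/r(s)³, and φ(s) = (2/r(s))·√(1 − 2m/r(s)). -/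
/-- Integration of the Schwarzschild background equations: if on an open interval
`I` the functions `φ > 0`, `ℰ < 0` satisfy `φ′ = −½φ² − ℰ` and `ℰ′ = −(3/2)φℰ`,
with Gaussian curvature `K = −ℰ + ¼φ² > 0` and areal radius `r = K^{−1/2}`, then
there is a constant `m > 0` (the Schwarzschild mass) such that on `I`:
`r > 2m`, `ℰ = −2m/r³` and `φ = (2/r)√(1 − 2m/r)`. -/
theorem schwarzschild_background_integration
    (I : Set ℝ) (hIopen : IsOpen I) (hIinterval : I.OrdConnected)
    (φ ℰ : ℝ → ℝ)
    (hφ : ∀ s ∈ I, HasDerivAt φ (-(1 / 2) * (φ s) ^ 2 - ℰ s) s)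
    (hℰ : ∀ s ∈ I, HasDerivAt ℰ (-(3 / 2) * φ s * ℰ s) s)
    (hφpos : ∀ s ∈ I, 0 < φ s)
    (hℰneg : ∀ s ∈ I, ℰ s < 0)
    (hKpos : ∀ s ∈ I, 0 < -ℰ s + (1 / 4) * (φ s) ^ 2) :
    ∃ m : ℝ, 0 < m ∧ ∀ s ∈ I,
      (fun s => (-ℰ s + (1 / 4) * (φ s) ^ 2) ^ (-(1 : ℝ) / 2)) s > 2 * m ∧
      ℰ s = -(2 * m) / ((-ℰ s + (1 / 4) * (φ s) ^ 2) ^ (-(1 : ℝ) / 2)) ^ 3 ∧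
      φ s = (2 / ((-ℰ s + (1 / 4) * (φ s) ^ 2) ^ (-(1 : ℝ) / 2))) *
        Real.sqrt (1 - 2 * m / ((-ℰ s + (1 / 4) * (φ s) ^ 2) ^ (-(1 : ℝ) / 2))) := by
  rcases I.eq_empty_or_nonempty with rfl | ⟨a, ha⟩
  · exact ⟨1, one_pos, fun s hs => absurd hs (Set.notMem_empty s)⟩
  have hr : ∀ s ∈ I, 0 < (-ℰ s + (1 / 4) * (φ s) ^ 2) ^ (-(1 : ℝ) / 2) :=
    fun s hs => Real.rpow_pos_of_pos (hKpos s hs) _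
  have hrK : ∀ s ∈ I, ((-ℰ s + (1 / 4) * (φ s) ^ 2) ^ (-(1 : ℝ) / 2)) ^ 2 *
      (-ℰ s + (1 / 4) * (φ s) ^ 2) = 1 := by
    intro s hs
    have hK := hKpos s hs
    rw [← Real.rpow_natCast, ← Real.rpow_mul hK.le]
    norm_num
    rw [Real.rpow_neg_one]
    exact inv_mul_cancel₀ hK.ne'
  have hd : ∀ s ∈ I, HasDerivAt (fun s => (ℰ s) ^ 2 / (-ℰ s + (1 / 4) * (φ s) ^ 2) ^ 3) 0 s := by
    intro s hs
    have hK := hKpos s hs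
    have h1 := ((hℰ s hs).pow 2).div
      (((hℰ s hs).neg.add (((hφ s hs).pow 2).const_mul (1 / 4))).pow 3) (by simpa using (pow_pos hK 3).ne')
    refine h1.congr_deriv ?_
    simp only [Pi.add_apply, Pi.neg_apply, Pi.pow_apply]
    rw [div_eq_zero_iff]
    left
    push_cast
    ring
  have hc : ∀ s ∈ I, (ℰ s) ^ 2 / (-ℰ s + (1 / 4) * (φ s) ^ 2) ^ 3 =
      (ℰ a) ^ 2 / (-ℰ a + (1 / 4) * (φ a) ^ 2) ^ 3 := by
    intro s hs
    exact hIopen.is_const_of_deriv_eq_zero hIinterval.isPreconnected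
      (fun x hx => (hd x hx).differentiableAt.differentiableWithinAt)
      (fun x hx => (hd x hx).deriv) hs ha
  have hF : ∀ s ∈ I, (ℰ s) ^ 2 / (-ℰ s + (1 / 4) * (φ s) ^ 2) ^ 3 =
      (-ℰ s * ((-ℰ s + (1 / 4) * (φ s) ^ 2) ^ (-(1 : ℝ) / 2)) ^ 3) ^ 2 := by
    intro s hs
    have hK := hKpos s hs
    have h := hrK s hs
    rw [div_eq_iff (pow_pos hK 3).ne']
    generalize (-ℰ s + (1 / 4) * (φ s) ^ 2) ^ (-(1 : ℝ) / 2) = r at *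
    generalize (-ℰ s + (1 / 4) * (φ s) ^ 2) = K at *
    calc (ℰ s) ^ 2 = (ℰ s) ^ 2 * (r ^ 2 * K) ^ 3 := by rw [h]; ring
      _ = _ := by ring
  have hp : ∀ s ∈ I, 0 < -ℰ s * ((-ℰ s + (1 / 4) * (φ s) ^ 2) ^ (-(1 : ℝ) / 2)) ^ 3 :=
    fun s hs => mul_pos (neg_pos.2 (hℰneg s hs)) (pow_pos (hr s hs) 3)
  refine ⟨(-ℰ a * ((-ℰ a + (1 / 4) * (φ a) ^ 2) ^ (-(1 : ℝ) / 2)) ^ 3) / 2,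
    half_pos (hp a ha), fun s hs => ?_⟩
  have hm : -ℰ s * ((-ℰ s + (1 / 4) * (φ s) ^ 2) ^ (-(1 : ℝ) / 2)) ^ 3 =
      -ℰ a * ((-ℰ a + (1 / 4) * (φ a) ^ 2) ^ (-(1 : ℝ) / 2)) ^ 3 := by
    have h := hc s hs
    rw [hF s hs, hF a ha] at h
    exact (pow_left_inj₀ (hp s hs).le (hp a ha).le two_ne_zero).1 h
  rw [← hm]
  have h0 := hr s hs
  have h1 := hrK s hs
  have hf := hφpos s hs
  clear hm hp hF hc hd hrK hr
  beta_reduce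
  generalize (-ℰ s + (1 / 4) * (φ s) ^ 2) ^ (-(1 : ℝ) / 2) = r at *
  refine ⟨?_, ?_, ?_⟩
  · have h2 : 0 < r * (r ^ 2 * φ s ^ 2) := by positivity
    have h3 : r - -ℰ s * r ^ 3 = r * (r ^ 2 * φ s ^ 2) / 4 := by
      linear_combination (-r) * h1
    linarith
  · field_simp
  · have h2 : 1 - 2 * (-ℰ s * r ^ 3 / 2) / r = (φ s * r / 2) ^ 2 := by
      field_simp
      linear_combination (-4) * h1
    rw [h2, Real.sqrt_sq (by positivity)]
    field_simp
end
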